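/- Let (X, τ) be a topological space, let 𝔘X be the ultrafilter space, and let mk : 𝔘X → SeparationQuotient(𝔘X) be the T₀ (Kolmogorov) quotient map. Then the map α_X : 𝔘X → ΣX, F ↦ {O ∈ τ : O ∈ F}, descends to a map φ : SeparationQuotient(𝔘X) → ΣX satisfying φ ∘ mk = α_X, and φ is a homeomorphism. -/

import Mathlib

open Set

/-- The ultrafilter space of a topological space: the set of ultrafilters on `X`,
topologised by the sets `O* = {F | O ∈ F}` for `O` open in `X`. -/
def UltraSpace (X : Type u) : Type u := Ultrafilter X

instance {X : Type u} : Membership (Set X) (UltraSpace X) :=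
  inferInstanceAs (Membership (Set X) (Ultrafilter X))

instance UltraSpace.instTopologicalSpace {X : Type u} [TopologicalSpace X] :
    TopologicalSpace (UltraSpace X) :=
  TopologicalSpace.generateFrom
    {s : Set (UltraSpace X) | ∃ O : Set X, IsOpen O ∧ s = {F : UltraSpace X | O ∈ F}}

/-- The unit `η_X : X → 𝔘X`, sending a point to the principal ultrafilter at it. -/
def UltraSpace.pureU {X : Type u} (x : X) : UltraSpace X := (pure x : Ultrafilter X)

/-- The pushforward `𝔘f` of ultrafilters along a map. -/
def UltraSpace.map {X Y : Type*} (f : X → Y) (F : UltraSpace X) : UltraSpace Y :=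
  (Ultrafilter.map f (F : Ultrafilter X) : Ultrafilter Y)

/-- A prime open filter on a topological space `X`: a collection of open sets containing
`univ`, not containing `∅`, closed under binary intersections, upward closed among open
sets, and prime. -/
structure PrimeOpenFilter (X : Type u) [TopologicalSpace X] where
  sets : Set (Set X)
  isOpen_mem : ∀ O ∈ sets, IsOpen O
  univ_mem : Set.univ ∈ sets
  empty_not_mem : ∅ ∉ sets
  inter_mem : ∀ O ∈ sets, ∀ U ∈ sets, O ∩ U ∈ sets
  mem_of_subset : ∀ O ∈ sets, ∀ U : Set X, IsOpen U → O ⊆ U → U ∈ sets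
  prime : ∀ O U : Set X, IsOpen O → IsOpen U → O ∪ U ∈ sets → O ∈ sets ∨ U ∈ sets

instance {X : Type u} [TopologicalSpace X] : Membership (Set X) (PrimeOpenFilter X) :=
  ⟨fun G O => O ∈ G.sets⟩

/-- The topology on the set `ΣX` of prime open filters, generated by the sets
`O^× = {𝒢 | O ∈ 𝒢}` for `O` open in `X`. -/
instance PrimeOpenFilter.instTopologicalSpace {X : Type u} [TopologicalSpace X] :
    TopologicalSpace (PrimeOpenFilter X) :=
  TopologicalSpace.generateFrom
    {s : Set (PrimeOpenFilter X) | ∃ O : Set X, IsOpen O ∧ s = {G : PrimeOpenFilter X | O ∈ G}}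

/-!
A prime open filter `𝒢` and its complement among the open sets form a family closed under finite
intersections and a family closed under finite unions, with no member of the first contained in a
member of the second. Hence some ultrafilter contains the first family and avoids the second, and
its trace on the open sets is `𝒢`. So `α_X` is surjective; it is inducing because the preimage of
`O^×` is `O*`. An inducing map onto a T₀ space identifies exactly the inseparable points and is a
quotient map, so it exhibits its codomain as the T₀ quotient of its domain.
-/

open Filter Function Topology TopologicalSpace

theorem isHomeomorph_separationQuotient_lift {Y Z : Type*} [TopologicalSpace Y]
    [TopologicalSpace Z] {f : Y → Z} (hind : IsInducing f) (hsurj : Surjective f)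
    (hf : ∀ x y, Inseparable x y → f x = f y) :
    IsHomeomorph (SeparationQuotient.lift f hf) := by
  rw [isHomeomorph_iff_isQuotientMap_injective]
  constructor
  · exact SeparationQuotient.isQuotientMap_mk.of_comp_isQuotientMap
      (hind.isQuotientMap_of_surjective hsurj)
  · refine SeparationQuotient.forall.2 fun x => SeparationQuotient.forall.2 fun y hxy => ?_
    have hfxy : f x = f y := hxy
    exact SeparationQuotient.mk_eq_mk.2 (hind.inseparable_iff.1 (.of_eq hfxy))

theorem exists_ultrafilter_forall_mem_forall_notMem {X : Type*} {A B : Set (Set X)}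
    (hA : InfClosed A) (hB : SupClosed B) (hAne : A.Nonempty) (hBne : B.Nonempty)
    (hAB : ∀ s ∈ A, ∀ t ∈ B, ¬s ⊆ t) :
    ∃ F : Ultrafilter X, (∀ s ∈ A, s ∈ F) ∧ ∀ t ∈ B, t ∉ F := by
  have basisA : (⨅ s ∈ A, 𝓟 s).HasBasis (· ∈ A) id :=
    hasBasis_biInf_principal hA.codirectedOn hAne
  have basisB : (⨅ t ∈ B, 𝓟 tᶜ).HasBasis (· ∈ B) compl :=
    hasBasis_biInf_principal
      (hB.directedOn.mono fun _ _ hst => compl_subset_compl.2 hst) hBne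
  have hne : ((⨅ s ∈ A, 𝓟 s) ⊓ ⨅ t ∈ B, 𝓟 tᶜ).NeBot :=
    (basisA.inf_basis_neBot_iff basisB).2 fun s hs t ht =>
      inter_compl_nonempty_iff.2 (hAB s hs t ht)
  obtain ⟨F, hF⟩ := exists_ultrafilter_iff.2 hne
  refine ⟨F, fun s hs => hF (mem_inf_of_left (basisA.mem_of_mem hs)), fun t ht => ?_⟩
  exact Ultrafilter.compl_mem_iff_notMem.1 (hF (mem_inf_of_right (basisB.mem_of_mem ht)))

namespace PrimeOpenFilter

variable {X : Type*} [TopologicalSpace X]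

theorem ext_of_isOpen {G H : PrimeOpenFilter X} (h : ∀ O, IsOpen O → (O ∈ G ↔ O ∈ H)) :
    G = H := by
  have hsets : G.sets = H.sets := Set.ext fun O =>
    ⟨fun hO => (h O (G.isOpen_mem O hO)).1 hO, fun hO => (h O (H.isOpen_mem O hO)).2 hO⟩
  cases G
  cases H
  congr

theorem isOpen_setOf_mem {O : Set X} (hO : IsOpen O) : IsOpen {G : PrimeOpenFilter X | O ∈ G} :=
  isOpen_generateFrom_of_mem ⟨O, hO, rfl⟩

instance : T0Space (PrimeOpenFilter X) where
  t0 _ _ h := ext_of_isOpen fun _ hO => h.mem_open_iff (isOpen_setOf_mem hO)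

theorem exists_ultrafilter_mem_iff (G : PrimeOpenFilter X) :
    ∃ F : Ultrafilter X, ∀ O, IsOpen O → (O ∈ F ↔ O ∈ G) := by
  have hinf : InfClosed G.sets := fun O hO U hU => G.inter_mem O hO U hU
  have hsup : SupClosed {U | IsOpen U ∧ U ∉ G.sets} := fun U hU V hV =>
    ⟨hU.1.union hV.1, fun hUV => (G.prime U V hU.1 hV.1 hUV).elim hU.2 hV.2⟩
  obtain ⟨F, hmem, hnotMem⟩ := exists_ultrafilter_forall_mem_forall_notMem hinf hsup
    ⟨univ, G.univ_mem⟩ ⟨∅, isOpen_empty, G.empty_not_mem⟩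
    fun O hO U hU hOU => hU.2 (G.mem_of_subset O hO U hU.1 hOU)
  exact ⟨F, fun O hO => ⟨fun hOF => by_contra fun hOG => hnotMem O ⟨hO, hOG⟩ hOF, hmem O⟩⟩

end PrimeOpenFilter

namespace UltraSpace

variable {X : Type*} [TopologicalSpace X]

/-- The map `α_X : 𝔘X → ΣX`, sending an ultrafilter to the prime open filter of its open
members. -/
def trace (F : UltraSpace X) : PrimeOpenFilter X where
  sets := {O | IsOpen O ∧ O ∈ F}
  isOpen_mem _ hO := hO.1
  univ_mem := ⟨isOpen_univ, univ_mem (f := Ultrafilter.toFilter F)⟩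
  empty_not_mem hO := Ultrafilter.empty_notMem (f := F) hO.2
  inter_mem _ hO _ hU := ⟨hO.1.inter hU.1, inter_mem (f := Ultrafilter.toFilter F) hO.2 hU.2⟩
  mem_of_subset _ hO _ hU hOU :=
    ⟨hU, mem_of_superset (f := Ultrafilter.toFilter F) hO.2 hOU⟩
  prime _ _ hO hU hOU :=
    (Ultrafilter.union_mem_iff (f := F).1 hOU.2).imp (And.intro hO) (And.intro hU)

theorem mem_trace {F : UltraSpace X} {O : Set X} : O ∈ F.trace ↔ IsOpen O ∧ O ∈ F :=
  Iff.rfl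

theorem mem_trace_of_isOpen {F : UltraSpace X} {O : Set X} (hO : IsOpen O) :
    O ∈ F.trace ↔ O ∈ F :=
  mem_trace.trans (and_iff_right hO)

theorem trace_surjective : Surjective (trace : UltraSpace X → PrimeOpenFilter X) := fun G => by
  obtain ⟨F, hF⟩ := G.exists_ultrafilter_mem_iff
  exact ⟨F, PrimeOpenFilter.ext_of_isOpen fun O hO => (mem_trace_of_isOpen hO).trans (hF O hO)⟩

theorem preimage_trace_setOf_mem {O : Set X} (hO : IsOpen O) :
    trace ⁻¹' {G : PrimeOpenFilter X | O ∈ G} = {F : UltraSpace X | O ∈ F} :=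
  Set.ext fun _ => mem_trace_of_isOpen hO

theorem isInducing_trace : IsInducing (trace : UltraSpace X → PrimeOpenFilter X) where
  eq_induced := by
    refine Eq.trans (congrArg generateFrom ?_) induced_generateFrom_eq.symm
    ext s
    constructor
    · rintro ⟨O, hO, rfl⟩
      exact ⟨_, ⟨O, hO, rfl⟩, preimage_trace_setOf_mem hO⟩
    · rintro ⟨_, ⟨O, hO, rfl⟩, rfl⟩
      exact ⟨O, hO, preimage_trace_setOf_mem hO⟩

end UltraSpace

/-- the trace map `α_X : 𝔘X → ΣX` descends along the T₀ (Kolmogorov)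
quotient of `𝔘X` to a homeomorphism `φ : SeparationQuotient (𝔘X) ≃ₜ ΣX` with
`φ ∘ mk = α_X`. -/
theorem stmt5 {X : Type u} [TopologicalSpace X]
    (alphaX : UltraSpace X → PrimeOpenFilter X)
    (halpha : ∀ F : UltraSpace X, (alphaX F).sets = {O : Set X | IsOpen O ∧ O ∈ F}) :
    ∃ φ : SeparationQuotient (UltraSpace X) ≃ₜ PrimeOpenFilter X,
      ∀ F : UltraSpace X, φ (SeparationQuotient.mk F) = alphaX F := by
  obtain rfl : alphaX = UltraSpace.trace := funext fun F =>
    PrimeOpenFilter.ext_of_isOpen fun O _ => Set.ext_iff.1 (halpha F) O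
  have hlift : ∀ F F' : UltraSpace X, Inseparable F F' → F.trace = F'.trace := fun _ _ h =>
    (h.map UltraSpace.isInducing_trace.continuous).eq
  have hhomeo := isHomeomorph_separationQuotient_lift UltraSpace.isInducing_trace
    UltraSpace.trace_surjective hlift
  exact ⟨hhomeo.homeomorph, fun _ => rfl⟩
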